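/- arXiv:1609.04874 — 3 statements merged into one kernel-verified Lean document; each statement's English description precedes it below -/
import Mathlib

section
/- Let G be a group, S and T G-sets, and ρ : ℤ[S] → ℤ[T] a G-equivariant additive homomorphism. Suppose that S has finitely many G-orbits, T has finitely many G-orbits, the stabilizer in G of every element of T is finite, and there is a finite subset F ⊆ ker ρ such that ker ρ is generated as an abelian group by the set {g • f : g ∈ G, f ∈ F}. Then for every natural number n there exists a natural number B such that every x ∈ ker ρ with ‖x‖_S ≤ n can be written as x = ∑_{j=1}^m ε_j (g_j • f_j) with m ≤ B, ε_j ∈ {1, −1}, g_j ∈ G and f_j ∈ F. (Equivalently, the function FV_ρ(n) = sup{‖x‖_K : x ∈ ker ρ, ‖x‖_S ≤ n}, where ‖·‖_K is a filling norm on ker ρ, satisfies FV_ρ(n) < ∞ for all n.) -/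
open Finsupp

/-- Action of `g : G` on the permutation module `ℤ[S]`, permuting the basis. -/
def gact {G S : Type*} [Group G] [MulAction G S] (g : G) (x : S →₀ ℤ) : S →₀ ℤ :=
  Finsupp.equivMapDomain (MulAction.toPerm g) x

/-- The ℓ1-norm on `ℤ[S]`. -/
def l1 {S : Type*} (x : S →₀ ℤ) : ℕ := x.support.sum fun s => (x s).natAbs

/-- `x` is a part of `y`, written `x ⪯_S y`. -/
def IsPart {S : Type*} (x y : S →₀ ℤ) : Prop := ∀ s, x s ^ 2 ≤ x s * y s

/-- `x` and `y` have trivial S-intersection. -/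
def SIntTrivial {S : Type*} (x y : S →₀ ℤ) : Prop := ∀ s, 0 ≤ x s * y s

/-- membership in `D₁ = S ∪ (-S) ⊆ ℤ[S]`. -/
def InD1 {S : Type*} (x : S →₀ ℤ) : Prop :=
  ∃ s, x = Finsupp.single s 1 ∨ x = Finsupp.single s (-1)

/-- `x` and `y` have nontrivial ρ-intersection. -/
def RhoInt {S T : Type*} (ρ : (S →₀ ℤ) →+ (T →₀ ℤ)) (x y : S →₀ ℤ) : Prop :=
  ∃ x₁ y₁, InD1 x₁ ∧ InD1 y₁ ∧ IsPart x₁ x ∧ IsPart y₁ y ∧ ∃ t, ρ x₁ t * ρ y₁ t < 0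

/-- membership in `D_n`. -/
def InD {S T : Type*} (ρ : (S →₀ ℤ) →+ (T →₀ ℤ)) (n : ℕ) (x : S →₀ ℤ) : Prop :=
  ∃ c : ℕ → (S →₀ ℤ), (∀ i < n, InD1 (c i)) ∧ x = ∑ i ∈ Finset.range n, c i ∧
    ∀ k, 1 ≤ k → k < n →
      SIntTrivial (∑ i ∈ Finset.range k, c i) (c k) ∧
      RhoInt ρ (∑ i ∈ Finset.range k, c i) (c k)

/-- `x` is ρ-connected. -/
def RhoConnected {S T : Type*} (ρ : (S →₀ ℤ) →+ (T →₀ ℤ)) (x : S →₀ ℤ) : Prop :=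
  ∃ n, 1 ≤ n ∧ InD ρ n x

/-- `ρ` is G-equivariant. -/
def Equivariant (G : Type*) {S T : Type*} [Group G] [MulAction G S] [MulAction G T]
    (ρ : (S →₀ ℤ) →+ (T →₀ ℤ)) : Prop :=
  ∀ (g : G) (x : S →₀ ℤ), ρ (gact g x) = gact g (ρ x)

/-- `S` has finitely many G-orbits. -/
def FinitelyManyOrbits (G S : Type*) [Group G] [MulAction G S] : Prop :=
  ∃ R : Finset S, ∀ s : S, ∃ (g : G) (r : S), r ∈ R ∧ g • r = s

/-- every element of `T` has finite stabilizer. -/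
def FiniteStabilizers (G T : Type*) [Group G] [MulAction G T] : Prop :=
  ∀ t : T, {g : G | g • t = t}.Finite

section Aux

variable {G S T : Type*} [Group G] [MulAction G S] [MulAction G T]

lemma aux_gact_apply (g : G) (x : S →₀ ℤ) (s : S) : gact g x s = x (g⁻¹ • s) := rfl

lemma aux_gact_add (g : G) (x y : S →₀ ℤ) : gact g (x + y) = gact g x + gact g y := by
  ext s; simp [aux_gact_apply]

lemma aux_gact_zero (g : G) : gact g (0 : S →₀ ℤ) = 0 := by
  ext s; simp [aux_gact_apply]

lemma aux_gact_gact (g h : G) (x : S →₀ ℤ) : gact g (gact h x) = gact (g * h) x := by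
  ext s; simp [aux_gact_apply, mul_smul]

lemma aux_gact_inv (g : G) (x : S →₀ ℤ) : gact g (gact g⁻¹ x) = x := by
  ext s; simp [aux_gact_apply]

lemma aux_gact_zsmul (g : G) (n : ℤ) (x : S →₀ ℤ) : gact g (n • x) = n • gact g x := by
  ext s; simp [aux_gact_apply]

lemma aux_gact_sum (g : G) {m : ℕ} (x : Fin m → (S →₀ ℤ)) :
    gact g (∑ j, x j) = ∑ j, gact g (x j) := by
  ext s; simp [aux_gact_apply, Finsupp.finsetSum_apply]

lemma aux_gact_single (g : G) (s : S) (n : ℤ) :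
    gact g (Finsupp.single s n) = Finsupp.single (g • s) n := by
  simp [gact, Finsupp.equivMapDomain_single]

lemma aux_l1_gact (g : G) (x : S →₀ ℤ) : l1 (gact g x) = l1 x := by
  unfold l1 gact
  have h : (Finsupp.equivMapDomain (MulAction.toPerm g) x).support
      = x.support.map (MulAction.toPerm g).toEmbedding := rfl
  rw [h, Finset.sum_map]
  simp

lemma aux_le_l1 (x : S →₀ ℤ) (s : S) : (x s).natAbs ≤ l1 x := by
  by_cases h : s ∈ x.support
  · exact Finset.single_le_sum (f := fun s => (x s).natAbs) (fun _ _ => Nat.zero_le _) h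
  · simp [Finsupp.notMem_support_iff.1 h]

lemma aux_card_le_l1 (x : S →₀ ℤ) : x.support.card ≤ l1 x := by
  unfold l1
  rw [Finset.card_eq_sum_ones]
  refine Finset.sum_le_sum fun s hs => ?_
  have := Finsupp.mem_support_iff.1 hs
  omega

open Classical in
lemma aux_l1_filter (x : S →₀ ℤ) (W : Finset S) (s : S) (hs : s ∈ W) (hx : x s ≠ 0) :
    l1 (x.filter (fun a => ¬ a ∈ W)) < l1 x := by
  unfold l1
  rw [Finsupp.support_filter]
  have h1 : ∑ a ∈ x.support with ¬ a ∈ W, ((x.filter (fun a => ¬ a ∈ W)) a).natAbs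
      = ∑ a ∈ x.support with ¬ a ∈ W, (x a).natAbs := by
    refine Finset.sum_congr rfl fun a ha => ?_
    rw [Finsupp.filter_apply_pos]
    exact (Finset.mem_filter.1 ha).2
  rw [h1]
  refine Finset.sum_lt_sum_of_subset (i := s) (Finset.filter_subset _ _) (by simpa using hx)
    (by simp [hs]) (by omega) (fun _ _ _ => Nat.zero_le _)

/-- `x` is a sum of at most `B` signed translates of elements of `F`. -/
def Fills (G : Type*) {S : Type*} [Group G] [MulAction G S] (F : Finset (S →₀ ℤ)) (B : ℕ)
    (x : S →₀ ℤ) : Prop :=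
  ∃ m : ℕ, m ≤ B ∧
        ∃ (ε : Fin m → ℤ) (g : Fin m → G) (f : Fin m → (S →₀ ℤ)),
          (∀ j, ε j = 1 ∨ ε j = -1) ∧ (∀ j, f j ∈ F) ∧
          x = ∑ j, ε j • gact (g j) (f j)

lemma Fills.mono {F : Finset (S →₀ ℤ)} {B C : ℕ} {x : S →₀ ℤ} (h : Fills G F B x) (hBC : B ≤ C) :
    Fills G F C x := by
  obtain ⟨m, hm, r⟩ := h
  exact ⟨m, hm.trans hBC, r⟩

lemma Fills.zero (F : Finset (S →₀ ℤ)) (B : ℕ) : Fills G F B 0 :=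
  ⟨0, Nat.zero_le _, Fin.elim0, Fin.elim0, Fin.elim0, fun j => j.elim0, fun j => j.elim0, by simp⟩

lemma Fills.add {F : Finset (S →₀ ℤ)} {B C : ℕ} {x y : S →₀ ℤ} (hx : Fills G F B x)
    (hy : Fills G F C y) : Fills G F (B + C) (x + y) := by
  obtain ⟨m, hm, ε, g, f, h1, h2, h3⟩ := hx
  obtain ⟨m', hm', ε', g', f', h1', h2', h3'⟩ := hy
  refine ⟨m + m', by omega, Fin.append ε ε', Fin.append g g', Fin.append f f', ?_, ?_, ?_⟩
  · intro j
    induction j using Fin.addCases <;> simp [h1, h1']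
  · intro j
    induction j using Fin.addCases <;> simp [h2, h2']
  · rw [Fin.sum_univ_add]
    simp only [Fin.append_left, Fin.append_right]
    rw [← h3, ← h3']

lemma Fills.neg {F : Finset (S →₀ ℤ)} {B : ℕ} {x : S →₀ ℤ} (hx : Fills G F B x) :
    Fills G F B (-x) := by
  obtain ⟨m, hm, ε, g, f, h1, h2, h3⟩ := hx
  refine ⟨m, hm, fun j => - ε j, g, f, ?_, h2, ?_⟩
  · intro j
    rcases h1 j with h | h <;> simp [h]
  · rw [h3]; simp

lemma Fills.gact {F : Finset (S →₀ ℤ)} {B : ℕ} {x : S →₀ ℤ} (hx : Fills G F B x) (k : G) :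
    Fills G F B (gact k x) := by
  obtain ⟨m, hm, ε, g, f, h1, h2, h3⟩ := hx
  refine ⟨m, hm, ε, fun j => k * g j, f, h1, h2, ?_⟩
  rw [h3, aux_gact_sum]
  simp [aux_gact_zsmul, aux_gact_gact]

lemma Fills.of_closure {F : Finset (S →₀ ℤ)} {x : S →₀ ℤ}
    (hx : x ∈ AddSubgroup.closure
      {y : S →₀ ℤ | ∃ (g : G) (f : S →₀ ℤ), f ∈ F ∧ y = _root_.gact g f}) :
    ∃ B, Fills G F B x := by
  induction hx using AddSubgroup.closure_induction with
  | mem y hy =>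
    obtain ⟨g, f, hf, rfl⟩ := hy
    exact ⟨1, 1, le_rfl, fun _ => 1, fun _ => g, fun _ => f, by simp, by simp [hf], by simp⟩
  | zero => exact ⟨0, Fills.zero _ _⟩
  | add y z _ _ hy hz =>
    obtain ⟨B, hB⟩ := hy
    obtain ⟨C, hC⟩ := hz
    exact ⟨_, hB.add hC⟩
  | neg y _ hy =>
    obtain ⟨B, hB⟩ := hy
    exact ⟨B, hB.neg⟩

/-- Each `t` is hit by only finitely many basis elements. -/
lemma aux_fiber_finite (ρ : (S →₀ ℤ) →+ (T →₀ ℤ)) (hρ : Equivariant G ρ)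
    (hS : FinitelyManyOrbits G S) (hstab : FiniteStabilizers G T) (t : T) :
    {s : S | ρ (Finsupp.single s 1) t ≠ 0}.Finite := by
  obtain ⟨R, hR⟩ := hS
  have htr : ∀ u : T, {g : G | g • u = t}.Finite := by
    intro u
    by_cases h : ∃ g₀ : G, g₀ • u = t
    · obtain ⟨g₀, hg₀⟩ := h
      refine ((hstab u).image (fun h => g₀ * h)).subset ?_
      intro g hg
      refine ⟨g₀⁻¹ * g, ?_, by simp⟩
      have hg' : g • u = t := hg
      change (g₀⁻¹ * g) • u = u
      rw [mul_smul, hg', ← hg₀, inv_smul_smul]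
    · convert Set.finite_empty
      ext g
      simpa using fun hg => h ⟨g, hg⟩
  have hfin : (⋃ r ∈ (R : Set S), ⋃ u ∈ ((ρ (Finsupp.single r 1)).support : Set T),
      Set.image (fun g : G => g • r) {g : G | g • u = t}).Finite := by
    refine R.finite_toSet.biUnion fun r _ => ?_
    refine (Finset.finite_toSet _).biUnion fun u _ => (htr u).image _
  refine hfin.subset ?_
  intro s hs
  obtain ⟨g, r, hr, rfl⟩ := hR s
  have hs' : ρ (Finsupp.single (g • r) 1) t ≠ 0 := hs
  rw [← aux_gact_single, hρ, aux_gact_apply] at hs'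
  simp only [Set.mem_iUnion]
  exact ⟨r, hr, g⁻¹ • t, by simpa using hs', g, by simp, rfl⟩

lemma aux_rho_apply (ρ : (S →₀ ℤ) →+ (T →₀ ℤ)) (x : S →₀ ℤ) (t : T) :
    ρ x t = ∑ s ∈ x.support, x s * ρ (Finsupp.single s 1) t := by
  conv_lhs => rw [← Finsupp.sum_single x]
  rw [Finsupp.sum, map_sum, Finsupp.finsetSum_apply]
  refine Finset.sum_congr rfl fun s _ => ?_
  have : (Finsupp.single s (x s) : S →₀ ℤ) = x s • Finsupp.single s 1 := by simp
  rw [this, map_zsmul]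
  simp

open Classical in
lemma aux_ball (ρ : (S →₀ ℤ) →+ (T →₀ ℤ))
    (hfib : ∀ t, {s : S | ρ (Finsupp.single s 1) t ≠ 0}.Finite) (n : ℕ) :
    ∀ A : Finset S, ∃ A' : Finset S, ∀ x : S →₀ ℤ, ρ x = 0 → (x.support \ A).card ≤ n →
      ∃ W : Finset S, A ⊆ W ∧ W ⊆ A' ∧ ρ (x.filter (fun a => a ∈ W)) = 0 := by
  induction n with
  | zero =>
    intro A
    refine ⟨A, fun x hx hc => ⟨A, subset_rfl, subset_rfl, ?_⟩⟩
    have h : x.support ⊆ A := by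
      simpa [Finset.sdiff_eq_empty_iff_subset] using hc
    rw [Finsupp.filter_eq_self_iff _ _ |>.2 fun a ha => h (by simpa using ha)]
    exact hx
  | succ n ih =>
    intro A
    have hN : (⋃ a ∈ (A : Set S), ⋃ t ∈ ((ρ (Finsupp.single a 1)).support : Set T),
        {s : S | ρ (Finsupp.single s 1) t ≠ 0}).Finite :=
      A.finite_toSet.biUnion fun a _ => (Finset.finite_toSet _).biUnion fun t _ => hfib t
    obtain ⟨A', hA'⟩ := ih (A ∪ hN.toFinset)
    refine ⟨A ∪ A', fun x hx hc => ?_⟩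
    by_cases h : ∃ s ∈ x.support, s ∈ hN.toFinset ∧ s ∉ A
    · obtain ⟨s, hs, hsN, hsA⟩ := h
      have hlt : (x.support \ (A ∪ hN.toFinset)).card < (x.support \ A).card := by
        refine Finset.card_lt_card ⟨Finset.sdiff_subset_sdiff subset_rfl Finset.subset_union_left, ?_⟩
        intro hsub
        have := hsub (Finset.mem_sdiff.2 ⟨hs, hsA⟩)
        exact (Finset.mem_sdiff.1 this).2 (Finset.mem_union_right _ hsN)
      obtain ⟨W, h1, h2, h3⟩ := hA' x hx (by omega)
      exact ⟨W, Finset.subset_union_left.trans h1, h2.trans Finset.subset_union_right, h3⟩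
    · refine ⟨A, subset_rfl, Finset.subset_union_left, ?_⟩
      ext t
      by_contra hne
      have hne : ρ (x.filter (fun a => a ∈ A)) t ≠ 0 := hne
      have hex : ∃ a ∈ A, ρ (Finsupp.single a 1) t ≠ 0 := by
        by_contra hcon
        push Not at hcon
        apply hne
        rw [aux_rho_apply]
        refine Finset.sum_eq_zero fun s hs => ?_
        rw [hcon s (by rw [Finsupp.support_filter] at hs; exact (Finset.mem_filter.1 hs).2),
          mul_zero]
      obtain ⟨a, haA, hat⟩ := hex
      have hrest : ρ (x.filter (fun a => ¬ a ∈ A)) t = 0 := by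
        rw [aux_rho_apply]
        refine Finset.sum_eq_zero fun s hs => ?_
        rw [Finsupp.support_filter] at hs
        obtain ⟨hs1, hs2⟩ := Finset.mem_filter.1 hs
        by_contra hne'
        apply h
        refine ⟨s, hs1, ?_, hs2⟩
        rw [Set.Finite.mem_toFinset]
        simp only [Set.mem_iUnion]
        exact ⟨a, haA, t, by simpa using hat, right_ne_zero_of_mul hne'⟩
      apply hne
      have hsum := congrArg (fun z => ρ z t) (Finsupp.filter_add_filter_not x (fun a => a ∈ A))
      simp only [map_add, Finsupp.add_apply, hrest, hx] at hsum
      simpa using hsum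

open Classical in
/-- Uniform bound for kernel elements having a fixed point in the support. -/
lemma aux_step (ρ : (S →₀ ℤ) →+ (T →₀ ℤ))
    (hfib : ∀ t, {s : S | ρ (Finsupp.single s 1) t ≠ 0}.Finite)
    (F : Finset (S →₀ ℤ)) (hfill : ∀ x : S →₀ ℤ, ρ x = 0 → ∃ B, Fills G F B x) (n : ℕ) (r : S) :
    ∃ C, ∀ x : S →₀ ℤ, ρ x = 0 → l1 x ≤ n → x r ≠ 0 →
      ∃ y z, x = y + z ∧ Fills G F C y ∧ ρ z = 0 ∧ l1 z < l1 x := by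
  obtain ⟨A', hA'⟩ := aux_ball ρ hfib n {r}
  have hfill' : ∀ x : S →₀ ℤ, ∃ B, ρ x = 0 → Fills G F B x := by
    intro x
    by_cases h : ρ x = 0
    · obtain ⟨B, hB⟩ := hfill x h
      exact ⟨B, fun _ => hB⟩
    · exact ⟨0, fun h' => absurd h' h⟩
  choose b hb using hfill'
  refine ⟨(Finset.finsupp A' (fun _ => Finset.Icc (-(n : ℤ)) n)).sup b, fun x hx hn hr => ?_⟩
  obtain ⟨W, h1, h2, h3⟩ := hA' x hx
    ((Finset.card_le_card Finset.sdiff_subset).trans ((aux_card_le_l1 x).trans hn))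
  have hsum := Finsupp.filter_add_filter_not x (fun a => a ∈ W)
  refine ⟨x.filter (fun a => a ∈ W), x.filter (fun a => ¬ a ∈ W), hsum.symm, ?_, ?_, ?_⟩
  · refine (hb _ h3).mono (Finset.le_sup (f := b) ?_)
    rw [Finset.mem_finsupp_iff]
    constructor
    · rw [Finsupp.support_filter]
      intro s hs
      exact h2 (Finset.mem_filter.1 hs).2
    · intro s _
      have := (aux_le_l1 x s).trans hn
      rw [Finset.mem_Icc, Finsupp.filter_apply]
      split_ifs <;> omega
  · have := congrArg ρ hsum
    rwa [map_add, h3, zero_add, hx] at this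
  · exact aux_l1_filter x W r (h1 (by simp)) hr

end Aux

/-- Proposition (finiteness of `FV_ρ`): if `S/G` and `T/G` are finite, all
stabilizers of elements of `T` are finite, and `ker ρ` is generated as an
abelian group by the G-orbit of a finite set `F`, then every kernel element of
ℓ1-norm at most `n` is a sum of a uniformly bounded number of signed
G-translates of elements of `F`. -/
theorem stmt_1 {G S T : Type*} [Group G] [MulAction G S] [MulAction G T]
    (ρ : (S →₀ ℤ) →+ (T →₀ ℤ)) (hρ : Equivariant G ρ)
    (hS : FinitelyManyOrbits G S) (hT : FinitelyManyOrbits G T)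
    (hstab : FiniteStabilizers G T)
    (F : Finset (S →₀ ℤ)) (hF : ∀ f ∈ F, ρ f = 0)
    (hgen : ∀ x : S →₀ ℤ, ρ x = 0 →
      x ∈ AddSubgroup.closure {y : S →₀ ℤ | ∃ (g : G) (f : S →₀ ℤ), f ∈ F ∧ y = gact g f}) :
    ∀ n : ℕ, ∃ B : ℕ, ∀ x : S →₀ ℤ, ρ x = 0 → l1 x ≤ n →
      ∃ m : ℕ, m ≤ B ∧
        ∃ (ε : Fin m → ℤ) (g : Fin m → G) (f : Fin m → (S →₀ ℤ)),
          (∀ j, ε j = 1 ∨ ε j = -1) ∧ (∀ j, f j ∈ F) ∧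
          x = ∑ j, ε j • gact (g j) (f j) := by
  have hfib := aux_fiber_finite ρ hρ hS hstab
  have hfill : ∀ x : S →₀ ℤ, ρ x = 0 → ∃ B, Fills G F B x :=
    fun x hx => Fills.of_closure (hgen x hx)
  obtain ⟨R, hR⟩ := hS
  suffices H : ∀ n : ℕ, ∃ B : ℕ, ∀ x : S →₀ ℤ, ρ x = 0 → l1 x ≤ n → Fills G F B x from H
  intro n
  induction n with
  | zero =>
    refine ⟨0, fun x _ hx => ?_⟩
    have : x = 0 := by
      ext s
      have := aux_le_l1 x s
      simp only [Finsupp.coe_zero, Pi.zero_apply]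
      omega
    rw [this]
    exact Fills.zero _ _
  | succ n ih =>
    obtain ⟨B, hB⟩ := ih
    choose C hC using aux_step ρ hfib F hfill (n + 1)
    refine ⟨R.sup C + B, fun x hx hn => ?_⟩
    by_cases h0 : x = 0
    · rw [h0]
      exact Fills.zero _ _
    obtain ⟨s, hs⟩ := Finsupp.ne_iff.1 h0
    obtain ⟨g, r, hr, rfl⟩ := hR s
    obtain ⟨y, z, hxyz, hy, hz, hlt⟩ := hC r (gact g⁻¹ x)
      (by rw [hρ, hx, aux_gact_zero]) (by rwa [aux_l1_gact])
      (by simpa [aux_gact_apply] using hs)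
    rw [aux_l1_gact] at hlt
    have hfin : Fills G F (R.sup C + B) (gact g⁻¹ x) := by
      rw [hxyz]
      exact (hy.mono (Finset.le_sup (f := C) hr)).add (hB z hz (by omega))
    have := hfin.gact g
    rwa [aux_gact_inv] at this
end

section
/- Let G be a group, S and T G-sets, and ρ : ℤ[S] → ℤ[T] a G-equivariant additive homomorphism. Suppose that S has finitely many G-orbits, T has finitely many G-orbits, and the stabilizer in G of every element of T is finite. Let ν : ker ρ → ℝ≥0 be any G-invariant subadditive function, i.e. ν(x + y) ≤ ν(x) + ν(y) for all x, y ∈ ker ρ and ν(g • x) = ν(x) for all g ∈ G and x ∈ ker ρ. Then for every natural number n there exists a real number B such that every x ∈ ker ρ with ‖x‖_S ≤ n satisfies ν(x) ≤ B. -/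
open Finsupp

theorem gact_apply' {G S : Type*} [Group G] [MulAction G S] (g : G) (x : S →₀ ℤ) (s : S) :
    gact g x s = x (g⁻¹ • s) := rfl

theorem gact_single' {G S : Type*} [Group G] [MulAction G S] (g : G) (s : S) (a : ℤ) :
    gact g (single s a) = single (g • s) a := by
  unfold gact
  rw [Finsupp.equivMapDomain_single]
  rfl

theorem transporter_finite {G T : Type*} [Group G] [MulAction G T]
    (hstab : FiniteStabilizers G T) (u t : T) : {g : G | g • u = t}.Finite := by
  by_cases h : ∃ g0 : G, g0 • u = t
  · obtain ⟨g0, h0⟩ := h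
    refine ((hstab u).image (fun g => g0 * g)).subset ?_
    intro g hg
    refine ⟨g0⁻¹ * g, ?_, by simp⟩
    simp only [Set.mem_setOf_eq] at hg ⊢
    rw [mul_smul, hg, ← h0, inv_smul_smul]
  · convert Set.finite_empty
    ext g
    simp only [Set.mem_setOf_eq, Set.mem_empty_iff_false, iff_false]
    exact fun hg => h ⟨g, hg⟩

theorem fiber_finite {G S T : Type*} [Group G] [MulAction G S] [MulAction G T]
    (ρ : (S →₀ ℤ) →+ (T →₀ ℤ)) (hρ : Equivariant G ρ)
    (hS : FinitelyManyOrbits G S) (hstab : FiniteStabilizers G T) (t : T) :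
    {s : S | ρ (single s 1) t ≠ 0}.Finite := by
  obtain ⟨R, hR⟩ := hS
  have hf : (⋃ r ∈ R, ⋃ u ∈ (ρ (single r 1)).support,
      (fun g : G => g • r) '' {g : G | g • u = t}).Finite := by
    refine Set.Finite.biUnion R.finite_toSet fun r _ => ?_
    refine Set.Finite.biUnion (Finset.finite_toSet _) fun u _ => ?_
    exact (transporter_finite hstab u t).image _
  refine hf.subset ?_
  intro s hs
  obtain ⟨g, r, hr, rfl⟩ := hR s
  simp only [Set.mem_setOf_eq] at hs
  rw [← gact_single', hρ, gact_apply'] at hs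
  simp only [Set.mem_iUnion]
  exact ⟨r, hr, g⁻¹ • t, Finsupp.mem_support_iff.2 hs, g, by simp, rfl⟩

/-- the supports of `ρ s` and `ρ s'` meet -/
def Adj' {S T : Type*} (ρ : (S →₀ ℤ) →+ (T →₀ ℤ)) (s s' : S) : Prop :=
  ∃ t, ρ (single s 1) t ≠ 0 ∧ ρ (single s' 1) t ≠ 0

theorem nbr_finite {G S T : Type*} [Group G] [MulAction G S] [MulAction G T]
    (ρ : (S →₀ ℤ) →+ (T →₀ ℤ)) (hρ : Equivariant G ρ)
    (hS : FinitelyManyOrbits G S) (hstab : FiniteStabilizers G T) (s : S) :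
    {s' : S | Adj' ρ s s'}.Finite := by
  have hf : (⋃ t ∈ (ρ (single s 1)).support, {s' : S | ρ (single s' 1) t ≠ 0}).Finite :=
    Set.Finite.biUnion (Finset.finite_toSet _) fun t _ => fiber_finite ρ hρ hS hstab t
  refine hf.subset ?_
  rintro s' ⟨t, h1, h2⟩
  simp only [Set.mem_iUnion]
  exact ⟨t, Finsupp.mem_support_iff.2 h1, h2⟩

/-- ball around `R` -/
def ball' {S T : Type*} (ρ : (S →₀ ℤ) →+ (T →₀ ℤ)) (R : Set S) : ℕ → Set S
  | 0 => R
  | k + 1 => ball' ρ R k ∪ ⋃ s ∈ ball' ρ R k, {s' : S | Adj' ρ s s'}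

theorem rho_supp {S T : Type*} (ρ : (S →₀ ℤ) →+ (T →₀ ℤ)) (x : S →₀ ℤ) (t : T)
    (h : ρ x t ≠ 0) : ∃ s, x s ≠ 0 ∧ ρ (single s 1) t ≠ 0 := by
  by_contra! hc
  apply h
  have hx : x = ∑ s ∈ x.support, x s • single s (1 : ℤ) := by
    conv_lhs => rw [← Finsupp.sum_single x]
    simp [Finsupp.sum]
  rw [hx, map_sum, Finsupp.finsetSum_apply]
  refine Finset.sum_eq_zero fun s hs => ?_
  rw [map_zsmul, Finsupp.smul_apply, hc s (Finsupp.mem_support_iff.1 hs), smul_zero]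

open Classical in
theorem split_ker {S T : Type*} (ρ : (S →₀ ℤ) →+ (T →₀ ℤ)) (x : S →₀ ℤ) (hx : ρ x = 0)
    (p : S → Prop)
    (h : ∀ s s', x s ≠ 0 → x s' ≠ 0 → p s → ¬ p s' → ¬ Adj' ρ s s') :
    ρ (x.filter p) = 0 ∧ ρ (x.filter (fun s => ¬ p s)) = 0 := by
  have hadd : ρ (x.filter p) + ρ (x.filter (fun s => ¬ p s)) = 0 := by
    rw [← map_add, Finsupp.filter_pos_add_filter_neg, hx]
  have h1 : ρ (x.filter p) = 0 := by
    ext t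
    by_contra hne
    have hne : ρ (x.filter p) t ≠ 0 := hne
    have hne2 : ρ (x.filter (fun s => ¬ p s)) t ≠ 0 := by
      intro h0
      have := DFunLike.congr_fun hadd t
      rw [Finsupp.add_apply, h0, add_zero] at this
      exact hne this
    obtain ⟨s, hs, hst⟩ := rho_supp ρ _ t hne
    obtain ⟨s', hs', hst'⟩ := rho_supp ρ _ t hne2
    rw [Finsupp.filter_apply] at hs hs'
    split_ifs at hs hs' with a b
    all_goals first | exact h s s' hs hs' a b ⟨t, hst, hst'⟩ | exact absurd rfl hs | exact absurd rfl hs'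
  refine ⟨h1, ?_⟩
  rwa [h1, zero_add] at hadd

open Classical in
theorem bound_aux {G S T : Type*} [Group G] [MulAction G S] [MulAction G T]
    (ρ : (S →₀ ℤ) →+ (T →₀ ℤ)) (hρ : Equivariant G ρ)
    (hS : FinitelyManyOrbits G S)
    (hstab : FiniteStabilizers G T)
    (ν : (S →₀ ℤ) → NNReal)
    (hsub : ∀ x y : S →₀ ℤ, ρ x = 0 → ρ y = 0 → ν (x + y) ≤ ν x + ν y)
    (hinv : ∀ (g : G) (x : S →₀ ℤ), ρ x = 0 → ν (gact g x) = ν x) (N : ℕ) :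
    ∀ n : ℕ, ∃ B : NNReal, ∀ x : S →₀ ℤ, ρ x = 0 → x.support.card ≤ n →
      (∀ s, x s ∈ Finset.Icc (-(N : ℤ)) N) → ν x ≤ B := by
  intro n
  induction n with
  | zero =>
    refine ⟨ν 0, fun x _ hc _ => ?_⟩
    have : x = 0 := by simpa using hc
    rw [this]
  | succ n ih =>
    obtain ⟨B, hB⟩ := ih
    obtain ⟨R, hR⟩ := id hS
    have hball : ∀ k, (ball' ρ (R : Set S) k).Finite := by
      intro k
      induction k with
      | zero => exact R.finite_toSet
      | succ k ihk =>
        exact ihk.union (Set.Finite.biUnion ihk fun s _ => nbr_finite ρ hρ hS hstab s)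
    set F : Finset (S →₀ ℤ) :=
      (hball (n + 1)).toFinset.finsupp (fun _ => Finset.Icc (-(N : ℤ)) N) with hF
    refine ⟨B + B + ∑ y ∈ F, ν y, ?_⟩
    have key : ∀ x : S →₀ ℤ, ρ x = 0 → x.support.card ≤ n + 1 →
      (∀ s, x s ∈ Finset.Icc (-(N : ℤ)) N) → (∃ r ∈ R, x r ≠ 0) →
        ν x ≤ B + B + ∑ y ∈ F, ν y := by
      intro x hx hc hN ⟨r, hr, hxr⟩
      by_cases hsplit : ∃ p : S → Prop, (∃ s, x s ≠ 0 ∧ p s) ∧ (∃ s, x s ≠ 0 ∧ ¬ p s) ∧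
          ∀ s s', x s ≠ 0 → x s' ≠ 0 → p s → ¬ p s' → ¬ Adj' ρ s s'
      · obtain ⟨p, ⟨a, ha, hpa⟩, ⟨b, hb, hpb⟩, hp⟩ := hsplit
        obtain ⟨h1, h2⟩ := split_ker ρ x hx p hp
        have hN0 : (0 : ℤ) ∈ Finset.Icc (-(N : ℤ)) N := by simp
        have hfil : ∀ (q : S → Prop) [DecidablePred q], (∃ s, x s ≠ 0 ∧ ¬ q s) → ρ (x.filter q) = 0 →
            ν (x.filter q) ≤ B := by
          rintro q _ ⟨c, hc1, hc2⟩ hq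
          refine hB _ hq ?_ ?_
          · have : (x.filter q).support ⊂ x.support := by
              rw [Finsupp.support_filter]
              refine Finset.filter_ssubset.2 ⟨c, Finsupp.mem_support_iff.2 hc1, hc2⟩
            have := Finset.card_lt_card this
            omega
          · intro s
            rw [Finsupp.filter_apply]
            split_ifs
            · exact hN s
            · exact hN0
        have e := hsub _ _ h1 h2
        rw [Finsupp.filter_pos_add_filter_neg] at e
        refine e.trans (le_trans (add_le_add (hfil _ ⟨b, hb, hpb⟩ h1)
          (hfil (fun s => ¬ p s) ⟨a, ha, not_not.2 hpa⟩ h2)) le_self_add)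
      · push Not at hsplit
        have hk : ∀ k, (x.support : Set S) ⊆ ball' ρ (R : Set S) k ∨
            k + 1 ≤ (x.support.filter (· ∈ ball' ρ (R : Set S) k)).card := by
          have hrb : ∀ k, r ∈ ball' ρ (R : Set S) k := by
            intro k
            induction k with
            | zero => exact hr
            | succ k ihk => exact Or.inl ihk
          intro k
          induction k with
          | zero =>
            right
            rw [zero_add, Nat.one_le_iff_ne_zero, Finset.card_ne_zero]
            exact ⟨r, by simp [hxr, hrb 0]⟩
          | succ k ihk =>
            by_cases hs : (x.support : Set S) ⊆ ball' ρ (R : Set S) k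
            · left
              exact hs.trans Set.subset_union_left
            · right
              have ihk := ihk.resolve_left hs
              obtain ⟨b, hb, hpb⟩ := Set.not_subset.1 hs
              obtain ⟨s, s', h1, h2, h3, h4, h5⟩ :=
                hsplit (· ∈ ball' ρ (R : Set S) k) ⟨r, hxr, hrb k⟩
                  ⟨b, Finsupp.mem_support_iff.1 hb, hpb⟩
              have hlt : x.support.filter (· ∈ ball' ρ (R : Set S) k) ⊂
                  x.support.filter (· ∈ ball' ρ (R : Set S) (k + 1)) := by
                rw [Finset.ssubset_iff_of_subset]
                · refine ⟨s', ?_, ?_⟩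
                  · rw [Finset.mem_filter]
                    refine ⟨Finsupp.mem_support_iff.2 h2, Or.inr ?_⟩
                    simp only [Set.mem_iUnion]
                    exact ⟨s, h3, h5⟩
                  · rw [Finset.mem_filter]
                    exact fun h => h4 h.2
                · intro z hz
                  rw [Finset.mem_filter] at hz ⊢
                  exact ⟨hz.1, Or.inl hz.2⟩
              have := Finset.card_lt_card hlt
              omega
        have hxF : x ∈ F := by
          rw [hF, Finset.mem_finsupp_iff]
          refine ⟨?_, fun s _ => hN s⟩
          rcases hk (n + 1) with h | h
          · intro s hs
            rw [Set.Finite.mem_toFinset]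
            exact h hs
          · have := Finset.card_filter_le x.support (· ∈ ball' ρ (R : Set S) (n + 1))
            omega
        exact (Finset.single_le_sum (f := ν) (fun _ _ => zero_le) hxF).trans le_add_self
    intro x hx hc hN
    by_cases h0 : x = 0
    · subst h0
      exact (hB 0 hx (by simp) hN).trans (by rw [add_assoc]; exact le_self_add)
    · obtain ⟨s, hs⟩ := Finsupp.ne_iff.1 h0
      obtain ⟨g, r, hr, rfl⟩ := hR s
      rw [← hinv g⁻¹ x hx]
      refine key _ ?_ ?_ ?_ ⟨r, hr, ?_⟩
      · rw [hρ, hx]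
        ext t
        rfl
      · refine le_trans (le_of_eq ?_) hc
        unfold gact
        simp [Finsupp.equivMapDomain]
      · intro s
        rw [gact_apply']
        exact hN _
      · rw [gact_apply', inv_inv]
        exact hs

/-- Generalized finiteness: any G-invariant subadditive function on `ker ρ` is
bounded on kernel elements of bounded ℓ1-norm. -/
theorem stmt_2 {G S T : Type*} [Group G] [MulAction G S] [MulAction G T]
    (ρ : (S →₀ ℤ) →+ (T →₀ ℤ)) (hρ : Equivariant G ρ)
    (hS : FinitelyManyOrbits G S) (hT : FinitelyManyOrbits G T)
    (hstab : FiniteStabilizers G T)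
    (ν : (S →₀ ℤ) → NNReal)
    (hsub : ∀ x y : S →₀ ℤ, ρ x = 0 → ρ y = 0 → ν (x + y) ≤ ν x + ν y)
    (hinv : ∀ (g : G) (x : S →₀ ℤ), ρ x = 0 → ν (gact g x) = ν x) :
    ∀ n : ℕ, ∃ B : ℝ, ∀ x : S →₀ ℤ, ρ x = 0 → l1 x ≤ n → (ν x : ℝ) ≤ B := by
  intro n
  obtain ⟨B, hB⟩ := bound_aux ρ hρ hS hstab ν hsub hinv n n
  refine ⟨B, fun x hx hl => ?_⟩
  have hle : ∀ s ∈ x.support, (x s).natAbs ≤ n := fun s hs =>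
    (Finset.single_le_sum (f := fun s => (x s).natAbs) (fun _ _ => Nat.zero_le _) hs).trans hl
  refine NNReal.coe_le_coe.2 (hB x hx ?_ ?_)
  · refine le_trans ?_ hl
    rw [Finset.card_eq_sum_ones]
    refine Finset.sum_le_sum fun s hs => ?_
    have := Finsupp.mem_support_iff.1 hs
    omega
  · intro s
    rw [Finset.mem_Icc]
    by_cases hs : s ∈ x.support
    · have := hle s hs
      omega
    · rw [Finsupp.notMem_support_iff.1 hs]
      omega
end

section
/- Let G be a group, S and T G-sets, and ρ : ℤ[S] → ℤ[T] a G-equivariant additive homomorphism. For every nonzero z ∈ ker ρ there exist ρ-connected elements x₁, …, x_m ∈ ker ρ such that z = x₁ + ⋯ + x_m, ∑_{i=1}^m ‖x_i‖_S = ‖z‖_S, m ≤ ‖z‖_S, and ‖x_i‖_S ≤ ‖z‖_S for each i. -/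
open Finsupp

lemma isPart_iff {S : Type*} (x y : S →₀ ℤ) :
    IsPart x y ↔ ∀ s, (0 ≤ x s ∧ x s ≤ y s) ∨ (x s ≤ 0 ∧ y s ≤ x s) := by
  unfold IsPart
  refine forall_congr' fun s => ?_
  constructor
  · intro h
    rcases lt_trichotomy (x s) 0 with h0 | h0 | h0
    · right
      exact ⟨h0.le, by nlinarith⟩
    · rw [h0]
      rcases le_total 0 (y s) with h1 | h1
      · left; exact ⟨le_rfl, h1⟩
      · right; exact ⟨le_rfl, h1⟩
    · left
      exact ⟨h0.le, by nlinarith⟩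
  · rintro (⟨h1, h2⟩ | ⟨h1, h2⟩) <;> nlinarith

lemma l1_add {S : Type*} (x y : S →₀ ℤ) (h : SIntTrivial x y) : l1 (x + y) = l1 x + l1 y := by
  classical
  have key : ∀ w : S →₀ ℤ, w.support ⊆ x.support ∪ y.support →
      l1 w = ∑ s ∈ x.support ∪ y.support, (w s).natAbs := by
    intro w hw
    unfold l1
    refine Finset.sum_subset hw fun s _ hs => ?_
    simpa using hs
  rw [key _ Finsupp.support_add, key x Finset.subset_union_left, key y Finset.subset_union_right,
    ← Finset.sum_add_distrib]
  refine Finset.sum_congr rfl fun s _ => ?_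
  have hs := h s
  rw [Finsupp.add_apply]
  rcases mul_nonneg_iff.1 hs with h | h <;> omega

lemma l1_D1 {S : Type*} {u : S →₀ ℤ} (h : InD1 u) : l1 u = 1 := by
  classical
  obtain ⟨s, rfl | rfl⟩ := h <;> unfold l1 <;>
    rw [Finsupp.support_single_ne_zero _ (by norm_num)] <;> simp

lemma unit_part_at {S : Type*} (w : S →₀ ℤ) (s : S) (hs : w s ≠ 0) :
    InD1 (Finsupp.single s (w s).sign) ∧ IsPart (Finsupp.single s (w s).sign) w := by
  classical
  rcases lt_or_gt_of_ne hs with h | h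
  · rw [Int.sign_eq_neg_one_of_neg h]
    refine ⟨⟨s, Or.inr rfl⟩, (isPart_iff _ _).2 fun r => ?_⟩
    rw [Finsupp.single_apply]
    split_ifs with hr
    · subst hr; omega
    · omega
  · rw [Int.sign_eq_one_of_pos h]
    refine ⟨⟨s, Or.inl rfl⟩, (isPart_iff _ _).2 fun r => ?_⟩
    rw [Finsupp.single_apply]
    split_ifs with hr
    · subst hr; omega
    · omega

lemma exists_unit_part {S : Type*} (f : (S →₀ ℤ) →+ ℤ) (w : S →₀ ℤ) (h : 0 < f w) :
    ∃ u, InD1 u ∧ IsPart u w ∧ 0 < f u := by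
  have hsum : f w = ∑ s ∈ w.support, f (Finsupp.single s (w s)) := by
    conv_lhs => rw [← Finsupp.sum_single w]
    rw [Finsupp.sum, map_sum]
  rw [hsum] at h
  obtain ⟨s, hs, hpos⟩ := Finset.exists_lt_of_sum_lt (s := w.support) (f := fun _ => (0 : ℤ))
    (g := fun s => f (Finsupp.single s (w s))) (by simpa using h)
  have hs' : w s ≠ 0 := by simpa using hs
  obtain ⟨h1, h2⟩ := unit_part_at w s hs'
  refine ⟨_, h1, h2, ?_⟩
  have e : Finsupp.single s (w s) = (w s).natAbs • Finsupp.single s (w s).sign := by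
    rw [Finsupp.smul_single]
    congr 1
    rw [nsmul_eq_mul, mul_comm]
    exact (Int.sign_mul_natAbs _).symm
  rw [e, map_nsmul, nsmul_eq_mul] at hpos
  exact pos_of_mul_pos_right hpos (by positivity)

lemma exists_opposite {S T : Type*} (ρ : (S →₀ ℤ) →+ (T →₀ ℤ)) (x y : S →₀ ℤ)
    (hxy : ρ x + ρ y = 0) (hx : ρ x ≠ 0) :
    ∃ u v, InD1 u ∧ InD1 v ∧ IsPart u x ∧ IsPart v y ∧ ∃ t, ρ u t * ρ v t < 0 := by
  obtain ⟨t, ht⟩ := Finsupp.ne_iff.1 hx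
  have hy : ρ x t + ρ y t = 0 := by rw [← Finsupp.add_apply, hxy]; rfl
  let f : (S →₀ ℤ) →+ ℤ := (Finsupp.applyAddHom t).comp ρ
  have hf : ∀ w, f w = ρ w t := fun _ => rfl
  have hg : ∀ w, (-f) w = - ρ w t := fun _ => rfl
  rw [Finsupp.zero_apply] at ht
  rcases lt_or_gt_of_ne ht with h | h
  · obtain ⟨u, hu, hux, hu0⟩ := exists_unit_part (-f) x (by rw [hg]; omega)
    obtain ⟨v, hv, hvy, hv0⟩ := exists_unit_part f y (by rw [hf]; omega)
    rw [hg] at hu0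
    rw [hf] at hv0
    exact ⟨u, v, hu, hv, hux, hvy, t, by nlinarith⟩
  · obtain ⟨u, hu, hux, hu0⟩ := exists_unit_part f x (by rw [hf]; omega)
    obtain ⟨v, hv, hvy, hv0⟩ := exists_unit_part (-f) y (by rw [hg]; omega)
    rw [hf] at hu0
    rw [hg] at hv0
    exact ⟨u, v, hu, hv, hux, hvy, t, by nlinarith⟩

lemma isPart_self {S : Type*} (x : S →₀ ℤ) : IsPart x x := fun s => (sq (x s)).le

lemma connected_unit {S T : Type*} (ρ : (S →₀ ℤ) →+ (T →₀ ℤ)) (u : S →₀ ℤ) (hu : InD1 u) :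
    RhoConnected ρ u :=
  ⟨1, le_rfl, fun _ => u, fun _ _ => hu, by simp, fun k h1 h2 => by omega⟩

lemma connected_add {S T : Type*} (ρ : (S →₀ ℤ) →+ (T →₀ ℤ)) (x v : S →₀ ℤ) (hv : InD1 v)
    (hx : RhoConnected ρ x) (h1 : SIntTrivial x v) (h2 : RhoInt ρ x v) :
    RhoConnected ρ (x + v) := by
  obtain ⟨n, hn, c, hc, hxc, hk⟩ := hx
  have hs : ∀ k ≤ n, ∑ i ∈ Finset.range k, (if i < n then c i else v)
      = ∑ i ∈ Finset.range k, c i := by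
    intro k hkn
    refine Finset.sum_congr rfl fun i hi => ?_
    rw [if_pos (lt_of_lt_of_le (Finset.mem_range.1 hi) hkn)]
  refine ⟨n + 1, by omega, fun i => if i < n then c i else v, ?_, ?_, ?_⟩
  · intro i _
    by_cases h : i < n
    · simpa [h] using hc i h
    · simpa [h] using hv
  · rw [Finset.sum_range_succ, hs n le_rfl, ← hxc]
    simp
  · intro k hk1 hk2
    rw [hs k (by omega)]
    by_cases h : k < n
    · simpa [h] using hk k hk1 h
    · have : k = n := by omega
      subst this
      rw [← hxc]
      simpa using ⟨h1, h2⟩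

lemma exists_connected_ker {S T : Type*} (ρ : (S →₀ ℤ) →+ (T →₀ ℤ)) (z : S →₀ ℤ)
    (hz : ρ z = 0) (hz0 : z ≠ 0) :
    ∃ x, RhoConnected ρ x ∧ IsPart x z ∧ 1 ≤ l1 x ∧ ρ x = 0 := by
  classical
  have hsplit : ∀ x, IsPart x z → l1 z = l1 x + l1 (z - x) := by
    intro x hx
    rw [← l1_add, add_sub_cancel]
    intro s
    rw [Finsupp.sub_apply]
    have := hx s
    nlinarith
  let P : ℕ → Prop := fun n => ∃ x, RhoConnected ρ x ∧ IsPart x z ∧ 1 ≤ l1 x ∧ l1 x = n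
  have hP1 : P 1 := by
    obtain ⟨s, hs⟩ := Finsupp.ne_iff.1 hz0
    obtain ⟨h1, h2⟩ := unit_part_at z s hs
    exact ⟨_, connected_unit ρ _ h1, h2, (l1_D1 h1).ge, l1_D1 h1⟩
  have hb : ∀ n, P n → n ≤ l1 z := by
    rintro n ⟨x, -, hx, -, rfl⟩
    have := hsplit x hx
    omega
  obtain ⟨x, hxc, hxz, hx1, hxn⟩ := Nat.findGreatest_spec (P := P) (hb 1 hP1) hP1
  refine ⟨x, hxc, hxz, hx1, ?_⟩
  by_contra hne
  obtain ⟨u, v, hu, hv, hux, hvy, ht⟩ := exists_opposite ρ x (z - x)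
    (by rw [← map_add, add_sub_cancel, hz]) hne
  have hp := (isPart_iff _ _).1 hxz
  have hq := (isPart_iff _ _).1 hvy
  have hST : SIntTrivial x v := by
    intro s
    have h1 := hp s
    have h2 := hq s
    rw [Finsupp.sub_apply] at h2
    have : (0 ≤ x s ∧ 0 ≤ v s) ∨ (x s ≤ 0 ∧ v s ≤ 0) := by omega
    exact mul_nonneg_iff.2 this
  have hpart : IsPart (x + v) z := by
    refine (isPart_iff _ _).2 fun s => ?_
    have h1 := hp s
    have h2 := hq s
    rw [Finsupp.sub_apply] at h2
    rw [Finsupp.add_apply]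
    omega
  have hl := l1_add x v hST
  rw [l1_D1 hv] at hl
  have hPn : P (l1 x + 1) := ⟨x + v, connected_add ρ x v hv hxc hST
    ⟨u, v, hu, hv, hux, isPart_self v, ht⟩, hpart, by omega, hl⟩
  have := Nat.le_findGreatest (hb _ hPn) hPn
  omega

lemma decomp {S T : Type*} (ρ : (S →₀ ℤ) →+ (T →₀ ℤ)) (N : ℕ) :
    ∀ z : S →₀ ℤ, l1 z ≤ N → ρ z = 0 → ∃ (m : ℕ) (x : Fin m → (S →₀ ℤ)),
      (∀ i, RhoConnected ρ (x i)) ∧ (∀ i, ρ (x i) = 0) ∧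
      z = ∑ i, x i ∧ (∑ i, l1 (x i)) = l1 z ∧ ∀ i, 1 ≤ l1 (x i) := by
  induction N with
  | zero =>
    intro z hN hz
    by_cases h0 : z = 0
    · subst h0
      exact ⟨0, fun _ => 0, fun i => i.elim0, fun i => i.elim0, by simp, by simp [l1],
        fun i => i.elim0⟩
    · obtain ⟨x, -, hx, hx1, -⟩ := exists_connected_ker ρ z hz h0
      have : l1 z = l1 x + l1 (z - x) := by
        rw [← l1_add, add_sub_cancel]
        intro s
        rw [Finsupp.sub_apply]
        have := hx s
        nlinarith
      omega
  | succ N ih =>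
    intro z hN hz
    by_cases h0 : z = 0
    · subst h0
      exact ⟨0, fun _ => 0, fun i => i.elim0, fun i => i.elim0, by simp, by simp [l1],
        fun i => i.elim0⟩
    · obtain ⟨x, hxc, hx, hx1, hx0⟩ := exists_connected_ker ρ z hz h0
      have hl : l1 z = l1 x + l1 (z - x) := by
        rw [← l1_add, add_sub_cancel]
        intro s
        rw [Finsupp.sub_apply]
        have := hx s
        nlinarith
      obtain ⟨m, y, h1, h2, h3, h4, h5⟩ := ih (z - x) (by omega) (by rw [map_sub, hz, hx0, sub_zero])
      refine ⟨m + 1, Fin.cons x y, ?_, ?_, ?_, ?_, ?_⟩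
      · exact Fin.cases hxc h1
      · exact Fin.cases hx0 h2
      · rw [Fin.sum_univ_succ]
        simp only [Fin.cons_zero, Fin.cons_succ]
        rw [← h3, add_sub_cancel]
      · rw [Fin.sum_univ_succ]
        simp only [Fin.cons_zero, Fin.cons_succ]
        rw [h4, hl]
      · exact Fin.cases hx1 h5

/-- Decomposition of kernel elements into ρ-connected parts, with norm control. -/
theorem stmt_5 {G S T : Type*} [Group G] [MulAction G S] [MulAction G T]
    (ρ : (S →₀ ℤ) →+ (T →₀ ℤ)) (hρ : Equivariant G ρ)
    (z : S →₀ ℤ) (hz : ρ z = 0) (hz0 : z ≠ 0) :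
    ∃ (m : ℕ) (x : Fin m → (S →₀ ℤ)),
      (∀ i, RhoConnected ρ (x i)) ∧ (∀ i, ρ (x i) = 0) ∧
      z = ∑ i, x i ∧ (∑ i, l1 (x i)) = l1 z ∧ m ≤ l1 z ∧ (∀ i, l1 (x i) ≤ l1 z) := by
  obtain ⟨m, x, h1, h2, h3, h4, h5⟩ := decomp ρ (l1 z) z le_rfl hz
  refine ⟨m, x, h1, h2, h3, h4, ?_, ?_⟩
  · rw [← h4]
    calc m = ∑ _i : Fin m, 1 := by simp
      _ ≤ ∑ i, l1 (x i) := Finset.sum_le_sum fun i _ => h5 i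
  · intro i
    rw [← h4]
    exact Finset.single_le_sum (f := fun i => l1 (x i)) (fun _ _ => Nat.zero_le _) (Finset.mem_univ i)
end
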